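/- For every k with 1 ≤ k ≤ m·n, the probability that Bingo is achieved exactly at the k-th call satisfies P(B = k) = Σ_{∅ ≠ X ⊆ 𝓛} (−1)^{|X|+1} · C(k−1, m(X)−1) / C(m·n, m(X)), where C(a,b) denotes the binomial coefficient. -/

import Mathlib

open Finset

/-- The row of an `n × n` Bingo board through index `i`. -/
def bingoRow (n : ℕ) (i : Fin n) : Finset (Fin n × Fin n) :=
  Finset.univ.filter (fun s => s.1 = i)

/-- The column of an `n × n` Bingo board through index `j`. -/
def bingoCol (n : ℕ) (j : Fin n) : Finset (Fin n × Fin n) :=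
  Finset.univ.filter (fun s => s.2 = j)

/-- The main diagonal `{(i,i)}`. -/
def bingoDiag (n : ℕ) : Finset (Fin n × Fin n) :=
  Finset.univ.filter (fun s => (s.2 : ℕ) = (s.1 : ℕ))

/-- The anti-diagonal `{(i, n-1-i)}`. -/
def bingoAntiDiag (n : ℕ) : Finset (Fin n × Fin n) :=
  Finset.univ.filter (fun s => (s.2 : ℕ) = n - 1 - (s.1 : ℕ))

/-- The set `𝓛` of winning lines: `n` rows, `n` columns and the two diagonals. -/
def bingoLines (n : ℕ) : Finset (Finset (Fin n × Fin n)) :=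
  (Finset.univ.image (bingoRow n)) ∪ (Finset.univ.image (bingoCol n)) ∪
    {bingoDiag n, bingoAntiDiag n}

/-- An `(n,m)`-Bingo card: an injective assignment of numbers such that column `j`
only uses numbers in `[m*j, m*(j+1))`. -/
def IsBingoCard (n m : ℕ) (c : Fin n × Fin n → Fin (m * n)) : Prop :=
  Function.Injective c ∧
    ∀ i j : Fin n, m * (j : ℕ) ≤ (c (i, j) : ℕ) ∧ (c (i, j) : ℕ) < m * ((j : ℕ) + 1)

/-- Bingo is achieved within the first `k` calls of `σ`: some winning line has all of its
numbers among `σ 0, …, σ (k-1)`. -/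
def BingoWins (n m : ℕ) (c : Fin n × Fin n → Fin (m * n))
    (σ : Equiv.Perm (Fin (m * n))) (k : ℕ) : Prop :=
  ∃ L ∈ bingoLines n, ∀ s ∈ L, ∃ t : Fin (m * n), (t : ℕ) < k ∧ σ t = c s

/-- `S_n = ∑_{∅ ≠ X ⊆ 𝓛} (-1)^{|X|+1} / (m(X)+1)`, where `m(X)` is the number of squares
covered by the union of the lines in `X`. -/
noncomputable def Sn (n : ℕ) : ℝ :=
  ∑ X ∈ (bingoLines n).powerset.filter (fun X => X.Nonempty),
    (-1 : ℝ) ^ (X.card + 1) / (((X.sup id).card : ℝ) + 1)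

/-!
A fixed set of `u` numbers is covered by the first `k` calls with probability
`C(k, u) / C(N, u)`: by symmetry the probability depends only on `u`, and whatever the calls are,
exactly `C(k, u)` of the `C(N, u)` sets of `u` numbers are covered. All lines of `X` are complete
exactly when the squares of their union are marked, so inclusion-exclusion gives `P(B ≤ k)`, and
Pascal's rule turns the difference `P(B ≤ k) - P(B ≤ k - 1)` into the stated sum.
-/

open scoped Nat Pointwise

section Permutations

variable {α : Type*} [DecidableEq α]

theorem exists_perm_smul_eq_of_card_eq {T T' : Finset α} (h : #T = #T') :
    ∃ g : Equiv.Perm α, g • T = T' := by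
  obtain ⟨g, hg⟩ := Set.powersetCard.isPretransitive.exists_smul_eq
    (Set.powersetCard.ofCard h) (Set.powersetCard.ofCard (rfl : #T' = #T'))
  exact ⟨g, congrArg Subtype.val hg⟩

variable [Fintype α]

theorem card_perm_subset_smul_congr (S : Finset α) {T T' : Finset α} (h : #T = #T') :
    #{σ : Equiv.Perm α | T ⊆ σ • S} = #{σ : Equiv.Perm α | T' ⊆ σ • S} := by
  obtain ⟨g, rfl⟩ := exists_perm_smul_eq_of_card_eq h
  exact card_equiv (Equiv.mulLeft g) fun σ ↦ by simp [mul_smul]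

theorem card_perm_subset_smul_mul_choose (S T : Finset α) :
    #{σ : Equiv.Perm α | T ⊆ σ • S} * (Fintype.card α).choose #T =
      (Fintype.card α)! * (#S).choose #T := by
  have covered_subsets (σ : Equiv.Perm α) :
      {T' ∈ powersetCard #T (univ : Finset α) | T' ⊆ σ • S} = powersetCard #T (σ • S) := by
    ext T'
    simp [mem_powersetCard, and_comm]
  calc #{σ : Equiv.Perm α | T ⊆ σ • S} * (Fintype.card α).choose #T
    _ = ∑ T' ∈ powersetCard #T univ, #{σ : Equiv.Perm α | T' ⊆ σ • S} := by
      rw [sum_congr rfl fun T' hT' ↦ card_perm_subset_smul_congr S (mem_powersetCard.1 hT').2,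
        sum_const, card_powersetCard, card_univ, smul_eq_mul, mul_comm]
    _ = ∑ σ : Equiv.Perm α, #{T' ∈ powersetCard #T univ | T' ⊆ σ • S} :=
      sum_card_bipartiteAbove_eq_sum_card_bipartiteBelow _
    _ = (Fintype.card α)! * (#S).choose #T := by
      simp [covered_subsets, Fintype.card_perm]

end Permutations

theorem cast_card_filter_exists_subset {ι β R : Type*} [DecidableEq ι] [Ring R]
    (𝓛 : Finset (Finset ι)) (s : Finset β) (M : β → Finset ι) :
    (#{b ∈ s | ∃ L ∈ 𝓛, L ⊆ M b} : R) =
      ∑ X ∈ 𝓛.powerset with X.Nonempty, (-1) ^ (#X + 1) * (#{b ∈ s | X.sup id ⊆ M b} : R) := by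
  classical
  let A (L : Finset ι) : Finset β := {b ∈ s | L ⊆ M b}
  have biUnion_eq : {b ∈ s | ∃ L ∈ 𝓛, L ⊆ M b} = 𝓛.biUnion A := by
    ext b
    simp only [A, mem_filter, mem_biUnion]
    tauto
  have inf_eq (X : Finset (Finset ι)) (hX : X.Nonempty) :
      X.inf' hX A = {b ∈ s | X.sup id ⊆ M b} := by
    ext b
    have : (∀ L ∈ X, b ∈ s) ↔ b ∈ s := hX.forall_const
    simp [A, mem_inf', forall_and, this]
  have inclusion_exclusion := congrArg (Int.cast : ℤ → R) (inclusion_exclusion_card_biUnion 𝓛 A)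
  push_cast at inclusion_exclusion
  simp only [biUnion_eq, inclusion_exclusion, inf_eq]
  exact sum_coe_sort _ fun X ↦ (-1) ^ (#X + 1) * (#{b ∈ s | X.sup id ⊆ M b} : R)

theorem card_sup_id_pos {ι : Type*} [DecidableEq ι] {X : Finset (Finset ι)} {L : Finset ι}
    (hLX : L ∈ X) (hL : L.Nonempty) : 0 < #(X.sup id) :=
  card_pos.2 (hL.mono (le_sup (f := id) hLX))

theorem eq_add_one_iff_of_isLeast {p : ℕ → Prop} {b : ℕ} (hp : Monotone p)
    (hb : IsLeast {k | p k} b) (k : ℕ) : b = k + 1 ↔ p (k + 1) ∧ ¬ p k := by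
  have le_iff (j : ℕ) : b ≤ j ↔ p j := ⟨fun h ↦ hp h hb.1, fun h ↦ hb.2 h⟩
  rw [← le_iff, ← le_iff]
  omega

theorem cast_card_filter_eq_add_one {β R : Type*} [AddGroupWithOne R] (s : Finset β)
    {p : ℕ → β → Prop} [∀ k, DecidablePred (p k)] (hp : Monotone p) {B : β → ℕ}
    (hB : ∀ b, IsLeast {k | p k b} (B b)) (k : ℕ) :
    (#{b ∈ s | B b = k + 1} : R) = #{b ∈ s | p (k + 1) b} - #{b ∈ s | p k b} := by
  classical
  have hsub : {b ∈ s | p k b} ⊆ {b ∈ s | p (k + 1) b} :=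
    monotone_filter_right s fun b _ ↦ hp k.le_succ b
  rw [← cast_card_sdiff hsub]
  congr 2
  ext b
  simp only [eq_add_one_iff_of_isLeast (fun _ _ hij ↦ hp hij b) (hB b) k, mem_filter, mem_sdiff]
  tauto

section Calls

variable {N : ℕ}

/-- The set of numbers `σ 0, …, σ (k - 1)` called in the first `k` calls, as the image under `σ`
of the first `k` times. -/
def calledNumbers (σ : Equiv.Perm (Fin N)) (k : ℕ) : Finset (Fin N) :=
  σ • ({t | (t : ℕ) < k} : Finset (Fin N))

theorem mem_calledNumbers {σ : Equiv.Perm (Fin N)} {k : ℕ} {x : Fin N} :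
    x ∈ calledNumbers σ k ↔ ∃ t : Fin N, (t : ℕ) < k ∧ σ t = x := by
  simp [calledNumbers, mem_smul_finset]

variable {ι : Type*} [Fintype ι] {c : ι → Fin N}

/-- The squares of a card `c` whose numbers have been called in the first `k` calls of `σ`.
The argument `k` precedes `σ` so that monotonicity in `k` reads `Monotone (markedSquares c)`. -/
def markedSquares (c : ι → Fin N) (k : ℕ) (σ : Equiv.Perm (Fin N)) : Finset ι :=
  {s | c s ∈ calledNumbers σ k}

theorem subset_markedSquares_iff_image_subset {U : Finset ι} {k : ℕ} {σ : Equiv.Perm (Fin N)} :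
    U ⊆ markedSquares c k σ ↔ U.image c ⊆ calledNumbers σ k := by
  simp [subset_iff, markedSquares]

theorem subset_markedSquares_iff {U : Finset ι} {k : ℕ} {σ : Equiv.Perm (Fin N)} :
    U ⊆ markedSquares c k σ ↔ ∀ s ∈ U, ∃ t : Fin N, (t : ℕ) < k ∧ σ t = c s := by
  simp [subset_iff, markedSquares, mem_calledNumbers]

theorem markedSquares_mono (c : ι → Fin N) : Monotone (markedSquares c) := by
  intro j k hjk σ
  refine subset_markedSquares_iff.2 fun s hs ↦ ?_
  obtain ⟨t, ht, hts⟩ := subset_markedSquares_iff.1 subset_rfl s hs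
  exact ⟨t, ht.trans_le hjk, hts⟩

theorem markedSquares_zero (c : ι → Fin N) (σ : Equiv.Perm (Fin N)) :
    markedSquares c 0 σ = ∅ := by
  simp [markedSquares, calledNumbers]

variable [DecidableEq ι]

theorem card_subset_markedSquares_div_factorial (hc : Function.Injective c) {k : ℕ} (hk : k ≤ N)
    (U : Finset ι) :
    (#{σ | U ⊆ markedSquares c k σ} : ℝ) / N ! = (k.choose #U : ℝ) / N.choose #U := by
  have card_image : #(U.image c) = #U := card_image_of_injective U hc
  have card_times : #{t : Fin N | (t : ℕ) < k} = k := by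
    rw [Fin.card_filter_val_lt, min_eq_right hk]
  have hU : #U ≤ N := by simpa [card_image] using card_le_univ (U.image c)
  have double_count := card_perm_subset_smul_mul_choose {t : Fin N | (t : ℕ) < k} (U.image c)
  rw [card_image, card_times, Fintype.card_fin] at double_count
  have choose_ne_zero : (N.choose #U : ℝ) ≠ 0 := mod_cast (Nat.choose_pos hU).ne'
  rw [div_eq_div_iff (mod_cast N.factorial_ne_zero) choose_ne_zero, mul_comm (k.choose #U : ℝ)]
  simp only [subset_markedSquares_iff_image_subset, calledNumbers]
  exact_mod_cast double_count

theorem card_exists_subset_markedSquares_div_factorial (hc : Function.Injective c)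
    (𝓛 : Finset (Finset ι)) {k : ℕ} (hk : k ≤ N) :
    (#{σ | ∃ L ∈ 𝓛, L ⊆ markedSquares c k σ} : ℝ) / N ! =
      ∑ X ∈ 𝓛.powerset with X.Nonempty,
        (-1) ^ (#X + 1) * (k.choose #(X.sup id) : ℝ) / N.choose #(X.sup id) := by
  rw [cast_card_filter_exists_subset, sum_div]
  refine sum_congr rfl fun X _ ↦ ?_
  rw [mul_div_assoc, card_subset_markedSquares_div_factorial hc hk, mul_div_assoc]

theorem bingo_pmf_general (hc : Function.Injective c) {𝓛 : Finset (Finset ι)}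
    (h𝓛 : ∀ L ∈ 𝓛, L.Nonempty) {B : Equiv.Perm (Fin N) → ℕ}
    (hB : ∀ σ, IsLeast {k | ∃ L ∈ 𝓛, L ⊆ markedSquares c k σ} (B σ)) {k : ℕ} (hk : k + 1 ≤ N) :
    (#{σ | B σ = k + 1} : ℝ) / N ! =
      ∑ X ∈ 𝓛.powerset with X.Nonempty,
        (-1) ^ (#X + 1) * (k.choose (#(X.sup id) - 1) : ℝ) / N.choose #(X.sup id) := by
  have bingo_mono : Monotone fun k σ ↦ ∃ L ∈ 𝓛, L ⊆ markedSquares c k σ :=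
    fun _ _ hij σ ⟨L, hL, hLi⟩ ↦ ⟨L, hL, hLi.trans (markedSquares_mono c hij σ)⟩
  rw [cast_card_filter_eq_add_one univ bingo_mono hB, sub_div,
    card_exists_subset_markedSquares_div_factorial hc 𝓛 hk,
    card_exists_subset_markedSquares_div_factorial hc 𝓛 (Nat.le_of_succ_le hk),
    ← sum_sub_distrib]
  refine sum_congr rfl fun X hX ↦ ?_
  obtain ⟨hX𝓛, L, hL⟩ := mem_filter.1 hX
  have hpos := card_sup_id_pos hL (h𝓛 L (mem_powerset.1 hX𝓛 hL))
  rw [Nat.choose_succ_left _ _ hpos]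
  push_cast
  ring

end Calls

theorem nonempty_of_mem_bingoLines {n : ℕ} (hn : 1 ≤ n) {L : Finset (Fin n × Fin n)}
    (hL : L ∈ bingoLines n) : L.Nonempty := by
  simp only [bingoLines, mem_union, mem_image, mem_univ, true_and, mem_insert,
    mem_singleton] at hL
  rcases hL with (⟨i, rfl⟩ | ⟨j, rfl⟩) | rfl | rfl
  · exact ⟨(i, i), by simp [bingoRow]⟩
  · exact ⟨(j, j), by simp [bingoCol]⟩
  · exact ⟨(⟨0, hn⟩, ⟨0, hn⟩), by simp [bingoDiag]⟩
  · exact ⟨(⟨0, hn⟩, ⟨n - 1, by omega⟩), by simp [bingoAntiDiag]⟩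

theorem bingoWins_iff_exists_subset_markedSquares {n m k : ℕ} {c : Fin n × Fin n → Fin (m * n)}
    {σ : Equiv.Perm (Fin (m * n))} :
    BingoWins n m c σ k ↔ ∃ L ∈ bingoLines n, L ⊆ markedSquares c k σ := by
  simp only [BingoWins, subset_markedSquares_iff]

theorem BingoWins.pos {n m k : ℕ} (hn : 1 ≤ n) {c : Fin n × Fin n → Fin (m * n)}
    {σ : Equiv.Perm (Fin (m * n))} (h : BingoWins n m c σ k) : 0 < k := by
  obtain ⟨L, hL, hLk⟩ := bingoWins_iff_exists_subset_markedSquares.1 h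
  rw [Nat.pos_iff_ne_zero]
  rintro rfl
  rw [markedSquares_zero, subset_empty] at hLk
  exact (nonempty_of_mem_bingoLines hn hL).ne_empty hLk

theorem setOf_one_le_and_bingoWins {n m : ℕ} (hn : 1 ≤ n) {c : Fin n × Fin n → Fin (m * n)}
    {σ : Equiv.Perm (Fin (m * n))} :
    {k | 1 ≤ k ∧ BingoWins n m c σ k} =
      {k | ∃ L ∈ bingoLines n, L ⊆ markedSquares c k σ} := by
  simp only [← bingoWins_iff_exists_subset_markedSquares]
  exact Set.ext fun k ↦ and_iff_right_of_imp fun h ↦ h.pos hn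

/-- inclusion-exclusion formula for the PMF `P(B = k)` of the number of
calls needed to achieve Bingo on a single `(n,m)`-Bingo card. -/
theorem bingo_pmf (n m : ℕ) (hn : 1 ≤ n) (hm : n ≤ m)
    (c : Fin n × Fin n → Fin (m * n)) (hc : IsBingoCard n m c)
    (B : Equiv.Perm (Fin (m * n)) → ℕ)
    (hB : ∀ σ, IsLeast {k : ℕ | 1 ≤ k ∧ BingoWins n m c σ k} (B σ))
    (k : ℕ) (hk1 : 1 ≤ k) (hk : k ≤ m * n) :
    (((Finset.univ : Finset (Equiv.Perm (Fin (m * n)))).filter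
        (fun σ => B σ = k)).card : ℝ) / (Nat.factorial (m * n)) =
      ∑ X ∈ (bingoLines n).powerset.filter (fun X => X.Nonempty),
        (-1 : ℝ) ^ (X.card + 1) *
          (Nat.choose (k - 1) ((X.sup id).card - 1) : ℝ) /
            (Nat.choose (m * n) ((X.sup id).card) : ℝ) := by
  obtain ⟨k, rfl⟩ := Nat.exists_eq_add_of_le' hk1
  simp only [setOf_one_le_and_bingoWins hn] at hB
  exact bingo_pmf_general hc.1 (fun _ ↦ nonempty_of_mem_bingoLines hn) hB hk
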